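/- Let u, v, w, y ∈ ℝ⁸ be linearly independent. The 4-dimensional subspace V = span_ℝ{u, v, w, y} is closed under the triple cross product (i.e. X(a,b,c) ∈ V for all a, b, c ∈ V) if and only if the 2-form η = u♭∧X(v,w,y)♭ + β(u, X(v,w,y)) + v♭∧X(w,u,y)♭ + β(v, X(w,u,y)) + w♭∧X(u,v,y)♭ + β(w, X(u,v,y)) + y♭∧X(v,u,w)♭ + β(y, X(v,u,w)) is identically zero, where for vectors a, b the 2-form β(a,b) is (x₁,x₂) ↦ Φ(a,b,x₁,x₂) and a♭ is the 1-form ⟨a,·⟩. -/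

import Mathlib

noncomputable section

/-- ℝ⁸ with coordinates (x₁,x₂,x₃,x₄,y₁,y₂,y₃,y₄) indexed 0,…,7. -/
abbrev V8 := Fin 8 → ℝ

/-- Standard basis vector. -/
def e8 (k : Fin 8) : V8 := fun j => if j = k then 1 else 0

/-- The wedge of four coordinate 1-forms, `(e^p ∧ e^q ∧ e^r ∧ e^s)(a,b,c,d)`. -/
def form4 (p q r s : Fin 8) (a b c d : V8) : ℝ :=
  Matrix.det !![a p, a q, a r, a s; b p, b q, b r, b s;
                c p, c q, c r, c s; d p, d q, d r, d s]

/-- The Spin(7) 4-form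
Φ = e¹∧e²∧e³∧e⁴ + (e¹∧e² − e³∧e⁴)∧(f¹∧f² − f³∧f⁴)
  + (e¹∧e³ − e⁴∧e²)∧(f¹∧f³ − f⁴∧f²) + (e¹∧e⁴ − e²∧e³)∧(f¹∧f⁴ − f²∧f³)
  + f¹∧f²∧f³∧f⁴,
with e¹,…,e⁴,f¹,…,f⁴ the coordinate 1-forms indexed 0,1,2,3,4,5,6,7. -/
def Phi8 (a b c d : V8) : ℝ :=
  form4 0 1 2 3 a b c d
    + (form4 0 1 4 5 a b c d - form4 0 1 6 7 a b c d
        - form4 2 3 4 5 a b c d + form4 2 3 6 7 a b c d)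
    + (form4 0 2 4 6 a b c d - form4 0 2 7 5 a b c d
        - form4 3 1 4 6 a b c d + form4 3 1 7 5 a b c d)
    + (form4 0 3 4 7 a b c d - form4 0 3 5 6 a b c d
        - form4 1 2 4 7 a b c d + form4 1 2 5 6 a b c d)
    + form4 4 5 6 7 a b c d

/-- The triple cross product, characterized by ⟨X(u,v,w), z⟩ = Φ(u,v,w,z)
    for the standard inner product; its k-th coordinate is Φ(u,v,w,eₖ). -/
def X8 (a b c : V8) : V8 := fun k => Phi8 a b c (e8 k)

/-- The standard inner product on ℝ⁸. -/
def dot8 (a b : V8) : ℝ := ∑ k, a k * b k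

/-- The wedge a♭ ∧ b♭ of the metric duals of two vectors, as a 2-form. -/
def wedgeFlat (a b : V8) (x y : V8) : ℝ := dot8 a x * dot8 b y - dot8 a y * dot8 b x

/-- The 2-form η of Proposition `cayleyprop`:
η = u♭∧X(v,w,y)♭ + u⌟X(v,w,y)⌟Φ + v♭∧X(w,u,y)♭ + v⌟X(w,u,y)⌟Φ
  + w♭∧X(u,v,y)♭ + w⌟X(u,v,y)⌟Φ + y♭∧X(v,u,w)♭ + y⌟X(v,u,w)⌟Φ,
where β(a,b) = Φ(a,b,·,·). -/
def eta8 (u v w y : V8) (x1 x2 : V8) : ℝ :=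
  wedgeFlat u (X8 v w y) x1 x2 + Phi8 u (X8 v w y) x1 x2
    + wedgeFlat v (X8 w u y) x1 x2 + Phi8 v (X8 w u y) x1 x2
    + wedgeFlat w (X8 u v y) x1 x2 + Phi8 w (X8 u v y) x1 x2
    + wedgeFlat y (X8 v u w) x1 x2 + Phi8 y (X8 v u w) x1 x2

def d3 (a b c : V8) (p q r : Fin 8) : ℝ :=
  a p * (b q * c r - b r * c q) - a q * (b p * c r - b r * c p) + a r * (b p * c q - b q * c p)

theorem form4_eq (p q r s : Fin 8) (a b c d : V8) : form4 p q r s a b c d =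
    d3 a b c p q r * d s - d3 a b c p q s * d r + d3 a b c p r s * d q - d3 a b c q r s * d p := by
  simp [form4, d3, Matrix.det_succ_row_zero, Fin.sum_univ_succ, Fin.succAbove]
  ring

set_option maxRecDepth 10000 in
theorem X8_eq (a b c : V8) : X8 a b c = ![
    - d3 a b c 1 2 3 - d3 a b c 1 4 5 + d3 a b c 1 6 7 - d3 a b c 2 4 6 - d3 a b c 2 5 7 - d3 a b c 3 4 7 + d3 a b c 3 5 6,
    d3 a b c 0 2 3 + d3 a b c 0 4 5 - d3 a b c 0 6 7 + d3 a b c 2 4 7 - d3 a b c 2 5 6 - d3 a b c 3 4 6 - d3 a b c 3 5 7,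
    - d3 a b c 0 1 3 + d3 a b c 0 4 6 + d3 a b c 0 5 7 - d3 a b c 1 4 7 + d3 a b c 1 5 6 + d3 a b c 3 4 5 - d3 a b c 3 6 7,
    d3 a b c 0 1 2 + d3 a b c 0 4 7 - d3 a b c 0 5 6 + d3 a b c 1 4 6 + d3 a b c 1 5 7 - d3 a b c 2 4 5 + d3 a b c 2 6 7,
    - d3 a b c 0 1 5 - d3 a b c 0 2 6 - d3 a b c 0 3 7 + d3 a b c 1 2 7 - d3 a b c 1 3 6 + d3 a b c 2 3 5 - d3 a b c 5 6 7,
    d3 a b c 0 1 4 - d3 a b c 0 2 7 + d3 a b c 0 3 6 - d3 a b c 1 2 6 - d3 a b c 1 3 7 - d3 a b c 2 3 4 + d3 a b c 4 6 7,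
    d3 a b c 0 1 7 + d3 a b c 0 2 4 - d3 a b c 0 3 5 + d3 a b c 1 2 5 + d3 a b c 1 3 4 - d3 a b c 2 3 7 - d3 a b c 4 5 7,
    - d3 a b c 0 1 6 + d3 a b c 0 2 5 + d3 a b c 0 3 4 - d3 a b c 1 2 4 + d3 a b c 1 3 5 + d3 a b c 2 3 6 + d3 a b c 4 5 6] := by
  ext k
  fin_cases k <;> simp [X8, Phi8, form4_eq, e8] <;> simp only [d3] <;> ring

theorem Phi8_eq (a b c d : V8) : Phi8 a b c d = dot8 (X8 a b c) d := by
  rw [X8_eq]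
  simp [Phi8, form4_eq, dot8, Fin.sum_univ_succ]
  simp [d3]
  ring


set_option maxRecDepth 100000 in
set_option maxHeartbeats 4000000 in
theorem key (u v w y : V8) : X8 u v (X8 u w y) =
   dot8 u u • X8 v w y - dot8 u v • X8 u w y + dot8 u w • X8 u v y - dot8 u y • X8 u v w
   + (dot8 u u * dot8 v y - dot8 u v * dot8 u y) • w
   - (dot8 u u * dot8 v w - dot8 u v * dot8 u w) • y
   + (- dot8 (X8 v w y) u - dot8 u w * dot8 v y + dot8 u y * dot8 v w) • u := by
  rw [X8_eq u v, X8_eq u w, X8_eq v w, X8_eq u v, X8_eq u v]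
  ext k
  simp only [Pi.add_apply, Pi.sub_apply, Pi.smul_apply, smul_eq_mul]
  fin_cases k <;> simp [dot8, Fin.sum_univ_succ, d3] <;> ring

theorem dot_comm (a b : V8) : dot8 a b = dot8 b a := by
  simp [dot8, mul_comm]

theorem dot_add_left (a a' b : V8) : dot8 (a + a') b = dot8 a b + dot8 a' b := by
  simp [dot8, add_mul, Finset.sum_add_distrib]

theorem dot_smul_left (r : ℝ) (a b : V8) : dot8 (r • a) b = r * dot8 a b := by
  simp [dot8, mul_assoc, Finset.mul_sum]

theorem dot_add_right (a b b' : V8) : dot8 a (b + b') = dot8 a b + dot8 a b' := by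
  simp [dot8, mul_add, Finset.sum_add_distrib]

theorem dot_smul_right (r : ℝ) (a b : V8) : dot8 a (r • b) = r * dot8 a b := by
  rw [dot_comm, dot_smul_left, dot_comm]

theorem dot_zero_left (b : V8) : dot8 0 b = 0 := by simp [dot8]

theorem dot_self (a : V8) (h : dot8 a a = 0) : a = 0 := by
  have h2 := (Finset.sum_eq_zero_iff_of_nonneg (fun i _ => mul_self_nonneg (a i))).1 h
  ext i
  simpa using h2 i (Finset.mem_univ i)

theorem dot_ext (a b : V8) (h : ∀ z, dot8 a z = dot8 b z) : a = b := by
  have h1 : dot8 (a + (-1 : ℝ) • b) (a + (-1 : ℝ) • b) = 0 := by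
    rw [dot_add_left, dot_smul_left, h]; ring
  have := dot_self _ h1
  ext i
  have := congrFun this i
  simp at this
  linarith

theorem X_swap12 (a b c : V8) : X8 b a c = - X8 a b c := by
  rw [X8_eq, X8_eq]
  ext k; fin_cases k <;> simp [d3] <;> ring

theorem X_swap23 (a b c : V8) : X8 a c b = - X8 a b c := by
  rw [X8_eq, X8_eq]
  ext k; fin_cases k <;> simp [d3] <;> ring

theorem X_add3 (a b c c' : V8) : X8 a b (c + c') = X8 a b c + X8 a b c' := by
  rw [X8_eq, X8_eq, X8_eq]
  ext k; fin_cases k <;> simp [d3] <;> ring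

theorem X_smul3 (r : ℝ) (a b c : V8) : X8 a b (r • c) = r • X8 a b c := by
  rw [X8_eq, X8_eq]
  ext k; fin_cases k <;> simp [d3] <;> ring

theorem X_neg3 (a b c : V8) : X8 a b (-c) = - X8 a b c := by
  rw [← neg_one_smul ℝ c, X_smul3, neg_one_smul]

theorem X_self12 (a c : V8) : X8 a a c = 0 := by
  rw [X8_eq]
  ext k; fin_cases k <;> simp [d3] <;> ring

theorem X_self23 (a c : V8) : X8 c a a = 0 := by
  rw [X8_eq]
  ext k; fin_cases k <;> simp [d3] <;> ring

theorem X_self13 (a c : V8) : X8 a c a = 0 := by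
  rw [X_swap23, X_self12, neg_zero]

theorem X_add2 (a b c c' : V8) : X8 a (c + c') b = X8 a c b + X8 a c' b := by
  rw [X_swap23, X_add3, X_swap23 a c, X_swap23 a c']; simp [add_comm]

theorem X_smul2 (r : ℝ) (a b c : V8) : X8 a (r • c) b = r • X8 a c b := by
  rw [X_swap23, X_smul3, X_swap23 a c]; simp

theorem X_add1 (a b c c' : V8) : X8 (c + c') a b = X8 c a b + X8 c' a b := by
  rw [X_swap12, X_add2, X_swap12 c, X_swap12 c']; simp [add_comm]

theorem X_smul1 (r : ℝ) (a b c : V8) : X8 (r • c) a b = r • X8 c a b := by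
  rw [X_swap12, X_smul2, X_swap12 c]; simp

theorem dotX_self (a b c : V8) : dot8 (X8 a b c) c = 0 := by
  rw [X8_eq]; simp [d3, dot8, Fin.sum_univ_succ]; ring

theorem dotX_swap (a b c d : V8) : dot8 (X8 a b d) c = - dot8 (X8 a b c) d := by
  have := dotX_self a b (c + d)
  rw [X_add3, dot_add_left, dot_add_right, dot_add_right, dotX_self, dotX_self] at this
  linarith

theorem dot_neg_left (a b : V8) : dot8 (-a) b = - dot8 a b := by
  simp [dot8]

theorem dotX_self2 (a b c : V8) : dot8 (X8 a b c) b = 0 := by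
  rw [X_swap23, dot_neg_left, dotX_self, neg_zero]

theorem dotX_self1 (a b c : V8) : dot8 (X8 a b c) a = 0 := by
  rw [X_swap12, dot_neg_left, dotX_self2, neg_zero]

/-- the alternating form attached to a pair of test vectors -/
def om (a b x z : V8) : ℝ := wedgeFlat a b x z + Phi8 a b x z

theorem om_swap (a b x z : V8) : om b a x z = - om a b x z := by
  simp only [om, wedgeFlat, Phi8_eq, X_swap12 a b, dot_neg_left]; ring

theorem om_add2 (a b b' x z : V8) : om a (b + b') x z = om a b x z + om a b' x z := by
  simp only [om, wedgeFlat, Phi8_eq, X_swap23 _ x, X_add3, dot_neg_left, dot_add_left]; ring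

theorem om_smul2 (r : ℝ) (a b x z : V8) : om a (r • b) x z = r * om a b x z := by
  simp only [om, wedgeFlat, Phi8_eq, X_swap23 _ x, X_smul3, dot_neg_left, dot_smul_left]; ring

theorem om_zero2 (a x z : V8) : om a 0 x z = 0 := by
  have := om_smul2 0 a 0 x z
  simpa using this

theorem om_self (a x z : V8) : om a a x z = 0 := by
  have := om_swap a a x z
  linarith

theorem eta_om (u v w y x z : V8) : eta8 u v w y x z =
    om u (X8 v w y) x z + om v (X8 w u y) x z + om w (X8 u v y) x z + om y (X8 v u w) x z := by
  simp only [eta8, om]; ring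

theorem eta_add3 (u v w y x x' z : V8) :
    eta8 u v w y (x + x') z = eta8 u v w y x z + eta8 u v w y x' z := by
  simp only [eta_om, om, wedgeFlat, Phi8_eq, X_add3, dot_add_left, dot_add_right]; ring

theorem eta_smul3 (r : ℝ) (u v w y x z : V8) :
    eta8 u v w y (r • x) z = r * eta8 u v w y x z := by
  simp only [eta_om, om, wedgeFlat, Phi8_eq, X_smul3, dot_smul_left, dot_smul_right]; ring

theorem X_neg2 (a b c : V8) : X8 a (-b) c = - X8 a b c := by
  rw [X_swap23, X_neg3, X_swap23 a b]; simp

theorem om_neg2 (a b x z : V8) : om a (-b) x z = - om a b x z := by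
  rw [← neg_one_smul ℝ b, om_smul2]; ring

/-- eta alternates -/
theorem eta_swap12 (u v w y x z : V8) : eta8 v u w y x z = - eta8 u v w y x z := by
  simp only [eta_om]
  rw [X_swap12 w u y, X_swap12 v w y, X_swap12 u v y, X_swap12 v u w]
  simp only [om_neg2]; ring

theorem eta_swap23 (u v w y x z : V8) : eta8 u w v y x z = - eta8 u v w y x z := by
  simp only [eta_om]
  rw [X_swap12 v w y, X_swap12 u v y, X_swap12 w u y, X_swap12 u w v, X_swap23 u v w,
    X_swap12 u v w]
  simp only [om_neg2]; ring

theorem eta_swap34 (u v w y x z : V8) : eta8 u v y w x z = - eta8 u v w y x z := by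
  simp only [eta_om]
  rw [X_swap23 v w y, X_swap12 u y w, X_swap23 u w y, X_swap12 w u y, X_swap12 v u w,
    X_swap12 u v y]
  simp only [om_neg2]; ring

theorem eta_u (u v w y z : V8) : eta8 u v w y u z = dot8
    ((-2 * dot8 u u) • X8 v w y + (-2 * dot8 u v) • X8 w u y + (-2 * dot8 u w) • X8 u v y
     + (-2 * dot8 u y) • X8 v u w + (2 * dot8 (X8 v w y) u) • u) z := by
  have e1 : X8 u (X8 v w y) u = 0 := X_self13 _ _
  have e2 : X8 v (X8 w u y) u = - X8 u v (X8 u w y) := by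
    rw [X_swap23 v u, X_swap12 u v, X_swap12 u w y, X_neg3]; simp
  have e3 : X8 w (X8 u v y) u = X8 u w (X8 u v y) := by
    rw [X_swap23 w u, X_swap12 u w]; simp
  have e4 : X8 y (X8 v u w) u = - X8 u y (X8 u v w) := by
    rw [X_swap23 y u, X_swap12 u y, X_swap12 u v w, X_neg3]; simp
  simp only [eta_om, om, wedgeFlat, Phi8_eq, e1, e2, e3, e4, key]
  have p1 : X8 w v y = - X8 v w y := X_swap12 _ _ _
  have p2 : X8 y v w = X8 v w y := by rw [X_swap12 v y w, X_swap23 v w y]; simp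
  have p3 : X8 w u y = - X8 u w y := X_swap12 _ _ _
  have p4 : X8 v u w = - X8 u v w := X_swap12 _ _ _
  have p5 : X8 u y v = - X8 u v y := X_swap23 _ _ _
  have p6 : X8 u y w = - X8 u w y := X_swap23 _ _ _
  have p7 : X8 u w v = - X8 u v w := X_swap23 _ _ _
  simp only [p1, p2, p3, p4, p5, p6, p7, sub_eq_add_neg, ← neg_smul, smul_neg, dot_neg_left,
    dot_add_left, dot_smul_left, neg_add, dotX_self1, dotX_self2, dotX_self, dot_zero_left,
    dot_comm v u, dot_comm w u, dot_comm y u, dot_comm w v, dot_comm y v, dot_comm y w]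
  ring

theorem eta_u_mem (u v w y : V8) (S : Submodule ℝ V8) (hu : u ∈ S)
    (h : ∀ x z, eta8 u v w y x z = 0) :
    dot8 u u • X8 v w y + dot8 u v • X8 w u y + dot8 u w • X8 u v y + dot8 u y • X8 v u w ∈ S := by
  have h0 : (-2 * dot8 u u) • X8 v w y + (-2 * dot8 u v) • X8 w u y + (-2 * dot8 u w) • X8 u v y
     + (-2 * dot8 u y) • X8 v u w + (2 * dot8 (X8 v w y) u) • u = 0 := by
    apply dot_ext
    intro z
    rw [← eta_u, h, dot_zero_left]
  have : dot8 u u • X8 v w y + dot8 u v • X8 w u y + dot8 u w • X8 u v y + dot8 u y • X8 v u w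
      = dot8 (X8 v w y) u • u := by
    ext i
    have := congrFun h0 i
    simp at this ⊢
    linarith
  rw [this]
  exact S.smul_mem _ hu

theorem eta_p_mem (u v w y : V8) (S : Submodule ℝ V8)
    (hu : u ∈ S) (hv : v ∈ S) (hw : w ∈ S) (hy : y ∈ S)
    (h : ∀ x z, eta8 u v w y x z = 0) (c : Fin 4 → ℝ) (p : V8)
    (hp : p = c 0 • u + c 1 • v + c 2 • w + c 3 • y) :
    dot8 p u • X8 v w y + dot8 p v • X8 w u y + dot8 p w • X8 u v y + dot8 p y • X8 v u w ∈ S := by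
  have m1 := eta_u_mem u v w y S hu h
  have m2 := eta_u_mem v w u y S hv (fun x z => by
    rw [eta_swap23, eta_swap12, h]; simp)
  have m3 := eta_u_mem w u v y S hw (fun x z => by
    rw [eta_swap12, eta_swap23, h]; simp)
  have m4 := eta_u_mem y v u w S hy (fun x z => by
    rw [eta_swap12, eta_swap23, eta_swap34, eta_swap12, h]; simp)
  have m := S.add_mem (S.add_mem (S.add_mem (S.smul_mem (c 0) m1) (S.smul_mem (c 1) m2))
    (S.smul_mem (c 2) m3)) (S.smul_mem (c 3) m4)
  convert m using 1
  have p1 : X8 u y w = X8 w u y := by rw [X_swap23, X_swap12 w u y]; simp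
  have p2 : X8 y v w = X8 v w y := by rw [X_swap12 v y w, X_swap23 v w y]; simp
  have p3 : X8 v y u = X8 u v y := by rw [X_swap23, X_swap12 u v y]; simp
  have p4 : X8 w v u = X8 v u w := by rw [X_swap12, X_swap23]; simp
  have p5 : X8 u w v = X8 v u w := by rw [X_swap23, X_swap12 v u w]; simp
  simp only [hp, p1, p2, p3, p4, p5, dot_add_left, dot_smul_left,
    dot_comm v u, dot_comm w u, dot_comm y u, dot_comm w v, dot_comm y v, dot_comm y w]
  module

theorem exists_dual (u v w y : V8) (h : LinearIndependent ℝ ![u, v, w, y]) (t : Fin 4 → ℝ) :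
    ∃ c : Fin 4 → ℝ, ∀ p, p = c 0 • u + c 1 • v + c 2 • w + c 3 • y →
      dot8 p u = t 0 ∧ dot8 p v = t 1 ∧ dot8 p w = t 2 ∧ dot8 p y = t 3 := by
  let P : (Fin 4 → ℝ) → V8 := fun c => c 0 • u + c 1 • v + c 2 • w + c 3 • y
  let T : (Fin 4 → ℝ) →ₗ[ℝ] (Fin 4 → ℝ) :=
    { toFun := fun c => ![dot8 (P c) u, dot8 (P c) v, dot8 (P c) w, dot8 (P c) y]
      map_add' := by
        intro c d
        ext i; fin_cases i <;> simp [P, dot_add_left, dot_smul_left] <;> ring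
      map_smul' := by
        intro c d
        ext i; fin_cases i <;> simp [P, dot_add_left, dot_smul_left] <;> ring }
  have inj : Function.Injective T := by
    rw [← LinearMap.ker_eq_bot, LinearMap.ker_eq_bot']
    intro c hc
    have h0 : dot8 (P c) u = 0 := congrFun hc 0
    have h1 : dot8 (P c) v = 0 := congrFun hc 1
    have h2 : dot8 (P c) w = 0 := congrFun hc 2
    have h3 : dot8 (P c) y = 0 := congrFun hc 3
    have : dot8 (P c) (P c) = 0 := by
      conv_lhs => arg 2; simp only [P]
      rw [dot_add_right, dot_add_right, dot_add_right, dot_smul_right, dot_smul_right,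
        dot_smul_right, dot_smul_right, h0, h1, h2, h3]
      simp
    have := dot_self _ this
    ext i
    exact Fintype.linearIndependent_iff.1 h c (by simpa [Fin.sum_univ_four, P] using this) i
  obtain ⟨c, hc⟩ := LinearMap.injective_iff_surjective.1 inj t
  refine ⟨c, ?_⟩
  rintro p rfl
  exact ⟨congrFun hc 0, congrFun hc 1, congrFun hc 2, congrFun hc 3⟩

theorem closed_of_gens (u v w y : V8) (S : Submodule ℝ V8) 
    (hA : X8 v w y ∈ S) (hB : X8 w u y ∈ S) (hC : X8 u v y ∈ S) (hD : X8 v u w ∈ S) :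
    ∀ a ∈ Submodule.span ℝ ({u, v, w, y} : Set V8),
      ∀ b ∈ Submodule.span ℝ ({u, v, w, y} : Set V8),
        ∀ c ∈ Submodule.span ℝ ({u, v, w, y} : Set V8), X8 a b c ∈ S := by
  have sw1 : ∀ a b c, X8 a b c ∈ S → X8 b a c ∈ S := by
    intro a b c h; rw [X_swap12]; exact S.neg_mem h
  have sw2 : ∀ a b c, X8 a b c ∈ S → X8 a c b ∈ S := by
    intro a b c h; rw [X_swap23]; exact S.neg_mem h
  have ext3 : ∀ a b, (∀ c ∈ ({u, v, w, y} : Set V8), X8 a b c ∈ S) →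
      ∀ c ∈ Submodule.span ℝ ({u, v, w, y} : Set V8), X8 a b c ∈ S := by
    intro a b h c hc
    induction hc using Submodule.span_induction with
    | mem x hx => exact h x hx
    | zero =>
      have := X_smul3 0 a b 0
      rw [zero_smul, zero_smul] at this
      rw [this]; exact S.zero_mem
    | add x z _ _ hx hz => rw [X_add3]; exact S.add_mem hx hz
    | smul r x _ hx => rw [X_smul3]; exact S.smul_mem _ hx
  have perm : ∀ a b c, X8 a b c ∈ S → X8 a b c ∈ S ∧ X8 a c b ∈ S ∧ X8 b a c ∈ S ∧
      X8 b c a ∈ S ∧ X8 c a b ∈ S ∧ X8 c b a ∈ S := by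
    intro a b c h
    exact ⟨h, sw2 _ _ _ h, sw1 _ _ _ h, sw2 _ _ _ (sw1 _ _ _ h), sw1 _ _ _ (sw2 _ _ _ h),
      sw1 _ _ _ (sw2 _ _ _ (sw1 _ _ _ h))⟩
  have gA := perm _ _ _ hA
  have gB := perm _ _ _ hB
  have gC := perm _ _ _ hC
  have gD := perm _ _ _ hD
  intro a ha b hb c hc
  refine ext3 a b (fun c hc => ?_) c hc
  refine sw2 _ _ _ (ext3 a c (fun b hb => ?_) b hb)
  refine sw1 _ _ _ (sw2 _ _ _ (ext3 c b (fun a ha => ?_) a ha))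
  simp only [Set.mem_insert_iff, Set.mem_singleton_iff] at ha hb hc
  rcases ha with rfl | rfl | rfl | rfl <;> rcases hb with rfl | rfl | rfl | rfl <;>
    rcases hc with rfl | rfl | rfl | rfl <;>
    simp only [X_self12, X_self13, X_self23, S.zero_mem, gA, gB, gC, gD]

theorem mem_span4 (u v w y a : V8) (h : a ∈ Submodule.span ℝ ({u, v, w, y} : Set V8)) :
    ∃ c : Fin 4 → ℝ, a = c 0 • u + c 1 • v + c 2 • w + c 3 • y := by
  simp only [Submodule.mem_span_insert, Submodule.mem_span_singleton] at h
  obtain ⟨p, _, ⟨q, _, ⟨r, _, ⟨s, rfl⟩, rfl⟩, rfl⟩, rfl⟩ := h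
  exact ⟨![p, q, r, s], by simp [add_assoc]⟩

theorem converse (u v w y : V8)
    (hA : X8 v w y ∈ Submodule.span ℝ ({u, v, w, y} : Set V8))
    (hB : X8 w u y ∈ Submodule.span ℝ ({u, v, w, y} : Set V8))
    (hC : X8 u v y ∈ Submodule.span ℝ ({u, v, w, y} : Set V8))
    (hD : X8 v u w ∈ Submodule.span ℝ ({u, v, w, y} : Set V8)) (x z : V8) :
    eta8 u v w y x z = 0 := by
  obtain ⟨a, ha⟩ := mem_span4 _ _ _ _ _ hA
  obtain ⟨b, hb⟩ := mem_span4 _ _ _ _ _ hB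
  obtain ⟨c, hc⟩ := mem_span4 _ _ _ _ _ hC
  obtain ⟨d, hd⟩ := mem_span4 _ _ _ _ _ hD
  have a1 := dotX_self1 v w y
  have a2 := dotX_self2 v w y
  have a3 := dotX_self v w y
  have b1 := dotX_self1 w u y
  have b2 := dotX_self2 w u y
  have b3 := dotX_self w u y
  have c1 := dotX_self1 u v y
  have c2 := dotX_self2 u v y
  have c3 := dotX_self u v y
  have d1 := dotX_self1 v u w
  have d2 := dotX_self2 v u w
  have d3 := dotX_self v u w
  have p1 : dot8 (X8 w u y) v = dot8 (X8 v w y) u := by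
    rw [X_swap23 w y u, dot_neg_left, dotX_swap w y v u, X_swap12 y w v, X_swap23 y v w,
      X_swap12 v y w, X_swap23 v w y]
    simp [dot_neg_left]
  have p2 : dot8 (X8 u v y) w = dot8 (X8 v w y) u := by
    rw [X_swap12 v u y, X_swap23 v y u, dot_neg_left, dot_neg_left, dotX_swap v y w u,
      X_swap23 v w y]
    simp [dot_neg_left]
  have p3 : dot8 (X8 v u w) y = dot8 (X8 v w y) u := by
    rw [X_swap23 v w u, dot_neg_left, dotX_swap v w y u, neg_neg]
  rw [eta_om]
  generalize X8 v w y = A at *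
  generalize X8 w u y = B at *
  generalize X8 u v y = C at *
  generalize X8 v u w = D at *
  have ex : ∀ (e : Fin 4 → ℝ) (q E : V8), E = e 0 • u + e 1 • v + e 2 • w + e 3 • y →
      dot8 q E = e 0 * dot8 q u + e 1 * dot8 q v + e 2 * dot8 q w + e 3 * dot8 q y := by
    rintro e q E rfl
    simp only [dot_add_right, dot_smul_right]
  by_cases hk : dot8 A u = 0
  · have kA : A = 0 := dot_self _ (by rw [ex a A A ha, hk, a1, a2, a3]; ring)
    have kB : B = 0 := dot_self _ (by rw [ex b B B hb, p1, hk, b1, b2, b3]; ring)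
    have kC : C = 0 := dot_self _ (by rw [ex c C C hc, p2, hk, c1, c2, c3]; ring)
    have kD : D = 0 := dot_self _ (by rw [ex d D D hd, p3, hk, d1, d2, d3]; ring)
    simp [kA, kB, kC, kD, om_zero2]
  · have q1 : a 1 = b 0 := by
      have := dot_comm A B
      rw [ex b A B hb, ex a B A ha, a1, a2, a3, b1, b2, b3, p1] at this
      apply mul_right_cancel₀ hk; linarith
    have q2 : a 2 = c 0 := by
      have := dot_comm A C
      rw [ex c A C hc, ex a C A ha, a1, a2, a3, c1, c2, c3, p2] at this
      apply mul_right_cancel₀ hk; linarith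
    have q3 : a 3 = d 0 := by
      have := dot_comm A D
      rw [ex d A D hd, ex a D A ha, a1, a2, a3, d1, d2, d3, p3] at this
      apply mul_right_cancel₀ hk; linarith
    have q4 : b 2 = c 1 := by
      have := dot_comm B C
      rw [ex c B C hc, ex b C B hb, b1, b2, b3, c1, c2, c3, p1, p2] at this
      apply mul_right_cancel₀ hk; linarith
    have q5 : b 3 = d 1 := by
      have := dot_comm B D
      rw [ex d B D hd, ex b D B hb, b1, b2, b3, d1, d2, d3, p1, p3] at this
      apply mul_right_cancel₀ hk; linarith
    have q6 : c 3 = d 2 := by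
      have := dot_comm C D
      rw [ex d C D hd, ex c D C hc, c1, c2, c3, d1, d2, d3, p2, p3] at this
      apply mul_right_cancel₀ hk; linarith
    rw [ha, hb, hc, hd]
    simp only [om_add2, om_smul2, om_self, om_swap u v, om_swap u w, om_swap u y, om_swap v w,
      om_swap v y, om_swap w y, q1, q2, q3, q4, q5, q6]
    ring

/-- for linearly independent u,v,w,y ∈ ℝ⁸, the subspace
V = span{u,v,w,y} is closed under the triple cross product iff the 2-form η
vanishes identically. -/
theorem stmt3 (u v w y : V8) (h : LinearIndependent ℝ ![u, v, w, y]) :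
    (∀ a ∈ Submodule.span ℝ ({u, v, w, y} : Set V8),
      ∀ b ∈ Submodule.span ℝ ({u, v, w, y} : Set V8),
        ∀ c ∈ Submodule.span ℝ ({u, v, w, y} : Set V8),
          X8 a b c ∈ Submodule.span ℝ ({u, v, w, y} : Set V8))
      ↔ (∀ x1 x2 : V8, eta8 u v w y x1 x2 = 0) := by
  have hu : u ∈ Submodule.span ℝ ({u, v, w, y} : Set V8) := Submodule.subset_span (by simp)
  have hv : v ∈ Submodule.span ℝ ({u, v, w, y} : Set V8) := Submodule.subset_span (by simp)
  have hw : w ∈ Submodule.span ℝ ({u, v, w, y} : Set V8) := Submodule.subset_span (by simp)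
  have hy : y ∈ Submodule.span ℝ ({u, v, w, y} : Set V8) := Submodule.subset_span (by simp)
  constructor
  · intro H
    exact converse u v w y (H _ hv _ hw _ hy) (H _ hw _ hu _ hy) (H _ hu _ hv _ hy)
      (H _ hv _ hu _ hw)
  · intro H
    have key2 : ∀ t : Fin 4 → ℝ, t 0 • X8 v w y + t 1 • X8 w u y + t 2 • X8 u v y
        + t 3 • X8 v u w ∈ Submodule.span ℝ ({u, v, w, y} : Set V8) := by
      intro t
      obtain ⟨c, hc⟩ := exists_dual u v w y h t
      obtain ⟨h0, h1, h2, h3⟩ := hc _ rfl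
      have := eta_p_mem u v w y _ hu hv hw hy H c _ rfl
      rwa [h0, h1, h2, h3] at this
    apply closed_of_gens
    · simpa using key2 ![1, 0, 0, 0]
    · simpa using key2 ![0, 1, 0, 0]
    · simpa using key2 ![0, 0, 1, 0]
    · simpa using key2 ![0, 0, 0, 1]
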